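/- arXiv:1303.0417 — 6 statements merged into one kernel-verified Lean document; each statement's English description precedes it below -/
import Mathlib

section
/- If 1 ≤ p ≤ 2, then Φ is strictly convex on ℝ^d. -/
open scoped ContDiff RealInnerProductSpace
open Filter

section StrictConvexity

variable {E : Type*} [NormedAddCommGroup E] [InnerProductSpace ℝ E]

/-- Strict Cauchy–Schwarz inequality for the vectors `(u, √ε)` and `(v, √ε)`. -/
lemma inner_add_lt_sqrt_mul_sqrt {ε : ℝ} (hε : 0 < ε) {u v : E} (huv : u ≠ v) :
    ⟪u, v⟫ + ε < √(‖u‖ ^ 2 + ε) * √(‖v‖ ^ 2 + ε) := by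
  have hdist : 0 < ‖u - v‖ ^ 2 := pow_pos (norm_pos_iff.2 (sub_ne_zero.2 huv)) 2
  rw [norm_sub_sq_real] at hdist
  have hcs : ⟪u, v⟫ ^ 2 ≤ (‖u‖ * ‖v‖) ^ 2 :=
    sq_le_sq.2 ((abs_real_inner_le_norm u v).trans (le_abs_self _))
  rw [← Real.sqrt_mul (by positivity)]
  apply Real.lt_sqrt_of_sq_lt
  nlinarith [mul_pos hε hdist]

lemma strictConvexOn_sqrt_norm_sub_sq_add {ε : ℝ} (hε : 0 < ε) (c : E) :
    StrictConvexOn ℝ Set.univ fun x : E ↦ √(‖x - c‖ ^ 2 + ε) := by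
  refine ⟨convex_univ, fun x _ y _ hxy α β hα hβ hαβ ↦ ?_⟩
  have hne : x - c ≠ y - c := fun h ↦ hxy (sub_left_injective h)
  have hlt := inner_add_lt_sqrt_mul_sqrt hε hne
  have hcomb : α • x + β • y - c = α • (x - c) + β • (y - c) := by
    calc α • x + β • y - c = α • x + β • y - (α + β) • c := by rw [hαβ, one_smul]
      _ = α • (x - c) + β • (y - c) := by module
  simp only [smul_eq_mul, hcomb]
  generalize x - c = u at *
  generalize y - c = v at *
  have hu : √(‖u‖ ^ 2 + ε) ^ 2 = ‖u‖ ^ 2 + ε := Real.sq_sqrt (by positivity)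
  have hv : √(‖v‖ ^ 2 + ε) ^ 2 = ‖v‖ ^ 2 + ε := Real.sq_sqrt (by positivity)
  have hupos : 0 < √(‖u‖ ^ 2 + ε) := Real.sqrt_pos.2 (by positivity)
  rw [Real.sqrt_lt' (by positivity), norm_add_sq_real, norm_smul, norm_smul,
    real_inner_smul_left, real_inner_smul_right, Real.norm_of_nonneg hα.le,
    Real.norm_of_nonneg hβ.le]
  have hmul := mul_lt_mul_of_pos_left hlt (mul_pos hα hβ)
  have hε_split : ε = (α + β) ^ 2 * ε := by rw [hαβ]; ring
  calc (α * ‖u‖) ^ 2 + 2 * (α * (β * ⟪u, v⟫)) + (β * ‖v‖) ^ 2 + ε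
      = α ^ 2 * (‖u‖ ^ 2 + ε) + 2 * (α * β * (⟪u, v⟫ + ε)) + β ^ 2 * (‖v‖ ^ 2 + ε) := by
        linear_combination hε_split
    _ < α ^ 2 * (‖u‖ ^ 2 + ε) + 2 * (α * β * (√(‖u‖ ^ 2 + ε) * √(‖v‖ ^ 2 + ε)))
          + β ^ 2 * (‖v‖ ^ 2 + ε) := by linarith
    _ = (α * √(‖u‖ ^ 2 + ε) + β * √(‖v‖ ^ 2 + ε)) ^ 2 := by
        linear_combination -α ^ 2 * hu - β ^ 2 * hv

lemma strictConvexOn_norm_sub_sq_add_rpow {ε p : ℝ} (hε : 0 < ε) (hp : 1 ≤ p) (c : E) :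
    StrictConvexOn ℝ Set.univ fun x : E ↦ (‖x - c‖ ^ 2 + ε) ^ (p / 2) := by
  have hpow (x : E) : (‖x - c‖ ^ 2 + ε) ^ (p / 2) = √(‖x - c‖ ^ 2 + ε) ^ p := by
    rw [Real.sqrt_eq_rpow, ← Real.rpow_mul (by positivity)]
    ring_nf
  simp only [hpow]
  refine ⟨convex_univ, fun x hx y hy hxy α β hα hβ hαβ ↦ ?_⟩
  exact (Real.rpow_lt_rpow (Real.sqrt_nonneg _)
    ((strictConvexOn_sqrt_norm_sub_sq_add hε c).2 hx hy hxy hα hβ hαβ) (by linarith)).trans_le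
    ((convexOn_rpow hp).2 (Real.sqrt_nonneg _) (Real.sqrt_nonneg _) hα.le hβ.le hαβ)

end StrictConvexity

theorem stmt_3
    (d n : ℕ) (hd : 1 ≤ d) (hn : 1 ≤ n)
    (a : Fin n → EuclideanSpace ℝ (Fin d))
    (w : Fin n → ℝ) (hw : ∀ j, 0 < w j)
    (ε : ℝ) (hε : 0 < ε)
    (p : ℝ) (hp0 : 0 < p) (hp2 : p ≤ 2)
    (Φ : EuclideanSpace ℝ (Fin d) → ℝ)
    (hΦ : ∀ x, Φ x = ∑ j, w j * (‖x - a j‖ ^ 2 + ε) ^ (p / 2))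
    (hp1 : 1 ≤ p) :
    StrictConvexOn ℝ Set.univ Φ := by
  refine ⟨convex_univ, fun x hx y hy hxy α β hα hβ hαβ ↦ ?_⟩
  simp only [hΦ, smul_eq_mul, Finset.mul_sum, ← Finset.sum_add_distrib]
  refine Finset.sum_lt_sum_of_nonempty ⟨⟨0, hn⟩, Finset.mem_univ _⟩ fun j _ ↦ ?_
  have hj := mul_lt_mul_of_pos_left
    ((strictConvexOn_norm_sub_sq_add_rpow hε hp1 (a j)).2 hx hy hxy hα hβ hαβ) (hw j)
  simp only [smul_eq_mul] at hj
  linarith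
end

section
/- If 1 ≤ p ≤ 2, then Φ has a unique global minimizer x* ∈ ℝ^d; that is, there exists a unique x* such that Φ(x*) ≤ Φ(x) for all x ∈ ℝ^d. -/
open scoped ContDiff RealInnerProductSpace
open Filter

section SmoothedNorm

variable {E : Type*} [NormedAddCommGroup E] [InnerProductSpace ℝ E]

/-- The smoothed norm `x ↦ √(‖x‖² + ε)` is strictly midpoint convex. -/
theorem sqrt_norm_sq_add_midpoint_lt {ε : ℝ} (hε : 0 < ε) {x y : E} (hxy : x ≠ y) :
    √(‖midpoint ℝ x y‖ ^ 2 + ε) < (√(‖x‖ ^ 2 + ε) + √(‖y‖ ^ 2 + ε)) / 2 := by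
  have hx : √(‖x‖ ^ 2 + ε) ^ 2 = ‖x‖ ^ 2 + ε := Real.sq_sqrt (by positivity)
  have hy : √(‖y‖ ^ 2 + ε) ^ 2 = ‖y‖ ^ 2 + ε := Real.sq_sqrt (by positivity)
  have hmid : ‖midpoint ℝ x y‖ ^ 2 = (‖x‖ ^ 2 + 2 * ⟪x, y⟫ + ‖y‖ ^ 2) / 4 := by
    rw [midpoint_eq_smul_add, norm_smul, mul_pow, norm_add_sq_real]
    norm_num
    ring
  have hsub : 0 < ‖x‖ ^ 2 - 2 * ⟪x, y⟫ + ‖y‖ ^ 2 := by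
    rw [← norm_sub_sq_real]
    have := norm_pos_iff.2 (sub_ne_zero.2 hxy)
    positivity
  have hcs : ⟪x, y⟫ ^ 2 ≤ ‖x‖ ^ 2 * ‖y‖ ^ 2 := by
    rw [← mul_pow]
    exact sq_le_sq' (abs_le.1 (abs_real_inner_le_norm x y)).1 (real_inner_le_norm x y)
  have hinner : ⟪x, y⟫ + ε < √(‖x‖ ^ 2 + ε) * √(‖y‖ ^ 2 + ε) := by
    refine lt_of_pow_lt_pow_left₀ 2 (by positivity) ?_
    rw [mul_pow, hx, hy]
    nlinarith [mul_pos hε hsub]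
  rw [Real.sqrt_lt' (by positivity), hmid]
  nlinarith

/-- For `1 ≤ p`, the function `x ↦ (‖x‖² + ε) ^ (p / 2)` is strictly midpoint convex. -/
theorem norm_sq_add_rpow_midpoint_lt {ε p : ℝ} (hε : 0 < ε) (hp : 1 ≤ p) {x y : E}
    (hxy : x ≠ y) :
    (‖midpoint ℝ x y‖ ^ 2 + ε) ^ (p / 2) <
      ((‖x‖ ^ 2 + ε) ^ (p / 2) + (‖y‖ ^ 2 + ε) ^ (p / 2)) / 2 := by
  have hsqrt (z : E) : (‖z‖ ^ 2 + ε) ^ (p / 2) = √(‖z‖ ^ 2 + ε) ^ p := by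
    rw [Real.sqrt_eq_rpow, ← Real.rpow_mul (by positivity)]
    ring_nf
  simp only [hsqrt]
  refine (Real.rpow_lt_rpow (Real.sqrt_nonneg _) (sqrt_norm_sq_add_midpoint_lt hε hxy)
    (by linarith)).trans_le ?_
  have h := (convexOn_rpow hp).2 (Real.sqrt_nonneg (‖x‖ ^ 2 + ε))
    (Real.sqrt_nonneg (‖y‖ ^ 2 + ε)) (by norm_num : (0 : ℝ) ≤ 1 / 2)
    (by norm_num : (0 : ℝ) ≤ 1 / 2) (by norm_num)
  simp only [smul_eq_mul, ← mul_add] at h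
  convert h using 1
  · ring_nf
  · ring

end SmoothedNorm

theorem tendsto_norm_sub_sq_add_rpow_cocompact_atTop {E : Type*} [NormedAddCommGroup E]
    [ProperSpace E] (c : E) (ε : ℝ) {q : ℝ} (hq : 0 < q) :
    Tendsto (fun x : E => (‖x - c‖ ^ 2 + ε) ^ q) (cocompact E) atTop := by
  have hnorm : Tendsto (fun x : E => ‖x - c‖) (cocompact E) atTop := by
    simpa only [dist_eq_norm] using tendsto_dist_right_cocompact_atTop c
  exact (tendsto_rpow_atTop hq).comp
    (tendsto_atTop_add_const_right _ _ ((tendsto_pow_atTop two_ne_zero).comp hnorm))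

theorem stmt_4
    (d n : ℕ) (hd : 1 ≤ d) (hn : 1 ≤ n)
    (a : Fin n → EuclideanSpace ℝ (Fin d))
    (w : Fin n → ℝ) (hw : ∀ j, 0 < w j)
    (ε : ℝ) (hε : 0 < ε)
    (p : ℝ) (hp0 : 0 < p) (hp2 : p ≤ 2)
    (Φ : EuclideanSpace ℝ (Fin d) → ℝ)
    (hΦ : ∀ x, Φ x = ∑ j, w j * (‖x - a j‖ ^ 2 + ε) ^ (p / 2))
    (hp1 : 1 ≤ p) :
    ∃! xstar : EuclideanSpace ℝ (Fin d), ∀ x, Φ xstar ≤ Φ x := by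
  have hcont : Continuous Φ := by
    rw [funext hΦ]
    refine continuous_finsetSum _ fun j _ => continuous_const.mul ?_
    exact Continuous.rpow_const (by fun_prop) fun x => Or.inr (by positivity)
  have hlim : Tendsto Φ (cocompact _) atTop := by
    refine tendsto_atTop_mono (fun x => ?_)
      ((tendsto_norm_sub_sq_add_rpow_cocompact_atTop (a ⟨0, hn⟩) ε
        (half_pos hp0)).const_mul_atTop (hw ⟨0, hn⟩))
    rw [hΦ]
    refine Finset.single_le_sum (f := fun j => w j * (‖x - a j‖ ^ 2 + ε) ^ (p / 2))
      (fun j _ => ?_) (Finset.mem_univ _)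
    have := hw j
    positivity
  obtain ⟨x, hx⟩ := hcont.exists_forall_le hlim
  refine ⟨x, hx, fun y hy => ?_⟩
  by_contra hne
  have hmid : Φ (midpoint ℝ y x) < (Φ y + Φ x) / 2 := by
    simp only [hΦ]
    rw [← Finset.sum_add_distrib, Finset.sum_div]
    refine Finset.sum_lt_sum_of_nonempty ⟨⟨0, hn⟩, Finset.mem_univ _⟩ fun j _ => ?_
    have h := norm_sq_add_rpow_midpoint_lt hε hp1 (sub_left_injective.ne hne : y - a j ≠ x - a j)
    have hshift : midpoint ℝ (y - a j) (x - a j) = midpoint ℝ y x - a j := by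
      simpa using (midpoint_vsub_midpoint (R := ℝ) y x (a j) (a j)).symm
    rw [hshift] at h
    linarith [mul_lt_mul_of_pos_left h (hw j)]
  linarith [hx (midpoint ℝ y x), hy (midpoint ℝ y x)]
end

section
/- For every y ∈ ℝ^d and every x ∈ ℝ^d, Φ(x) ≤ Ψ_y(x), where Ψ_y(x) = Φ(y) + ⟨x − y, ∇Φ(y)⟩ + (p/2) (Σ_{j=1}^n μ_j(y)) ‖x − y‖² and μ_j(y) = w_j (‖y − a_j‖² + ε)^{p/2 − 1}. Moreover Ψ_y(y) = Φ(y). -/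
open scoped ContDiff RealInnerProductSpace
open Filter

/-- The graph of `t ↦ t ^ q`, for `0 ≤ q ≤ 1`, lies below its tangent line at `v`. -/
theorem Real.rpow_le_tangent {u v q : ℝ} (hu : 0 ≤ u) (hv : 0 < v) (hq0 : 0 ≤ q) (hq1 : q ≤ 1) :
    u ^ q ≤ v ^ q + q * v ^ (q - 1) * (u - v) := by
  have hs : -1 ≤ u / v - 1 := by
    have : 0 ≤ u / v := by positivity
    linarith
  have h := rpow_one_add_le_one_add_mul_self hs hq0 hq1
  rw [add_sub_cancel, Real.div_rpow hu hv.le, div_le_iff₀ (Real.rpow_pos_of_pos hv q)] at h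
  refine h.trans_eq ?_
  rw [Real.rpow_sub_one hv.ne']
  field_simp

section

variable {E : Type*} [NormedAddCommGroup E] [InnerProductSpace ℝ E]

theorem hasFDerivAt_rpow_norm_sub_sq_add (b y : E) {ε : ℝ} (hε : 0 < ε) (q : ℝ) :
    HasFDerivAt (fun x : E => (‖x - b‖ ^ 2 + ε) ^ q)
      ((q * (‖y - b‖ ^ 2 + ε) ^ (q - 1)) • (2 • innerSL ℝ (y - b))) y := by
  have h : HasFDerivAt (fun x : E => ‖x - b‖ ^ 2 + ε) (2 • innerSL ℝ (y - b)) y := by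
    simpa using (((hasFDerivAt_id y).sub_const b).norm_sq).add_const ε
  have hpos : ‖y - b‖ ^ 2 + ε ≠ 0 := by positivity
  exact h.rpow_const (Or.inl hpos)

theorem rpow_norm_sub_sq_add_le (b x y : E) {ε : ℝ} (hε : 0 < ε) {q : ℝ} (hq0 : 0 ≤ q)
    (hq1 : q ≤ 1) :
    (‖x - b‖ ^ 2 + ε) ^ q ≤ (‖y - b‖ ^ 2 + ε) ^ q +
      q * (‖y - b‖ ^ 2 + ε) ^ (q - 1) * (2 * ⟪y - b, x - y⟫ + ‖x - y‖ ^ 2) := by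
  have h := Real.rpow_le_tangent (u := ‖x - b‖ ^ 2 + ε) (v := ‖y - b‖ ^ 2 + ε)
    (by positivity) (by positivity) hq0 hq1
  have hnorm : ‖x - b‖ ^ 2 = ‖y - b‖ ^ 2 + 2 * ⟪y - b, x - y⟫ + ‖x - y‖ ^ 2 := by
    rw [← norm_add_sq_real, add_comm (y - b), sub_add_sub_cancel]
  refine h.trans_eq ?_
  rw [hnorm]
  ring

end

theorem stmt_7
    (d n : ℕ) (hd : 1 ≤ d) (hn : 1 ≤ n)
    (a : Fin n → EuclideanSpace ℝ (Fin d))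
    (w : Fin n → ℝ) (hw : ∀ j, 0 < w j)
    (ε : ℝ) (hε : 0 < ε)
    (p : ℝ) (hp0 : 0 < p) (hp2 : p ≤ 2)
    (Φ : EuclideanSpace ℝ (Fin d) → ℝ)
    (hΦ : ∀ x, Φ x = ∑ j, w j * (‖x - a j‖ ^ 2 + ε) ^ (p / 2)) :
    ∀ y x,
      Φ x ≤ Φ y + ⟪x - y, gradient Φ y⟫ +
        p / 2 * (∑ j, w j * (‖y - a j‖ ^ 2 + ε) ^ (p / 2 - 1)) * ‖x - y‖ ^ 2 ∧
      Φ y = Φ y + ⟪y - y, gradient Φ y⟫ +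
        p / 2 * (∑ j, w j * (‖y - a j‖ ^ 2 + ε) ^ (p / 2 - 1)) * ‖y - y‖ ^ 2 := by
  intro y x
  refine ⟨?_, by simp⟩
  have hderiv : HasFDerivAt Φ (∑ j, w j • ((p / 2 * (‖y - a j‖ ^ 2 + ε) ^ (p / 2 - 1)) •
      (2 • innerSL ℝ (y - a j)))) y := by
    rw [funext hΦ]
    exact HasFDerivAt.fun_sum fun j _ =>
      (hasFDerivAt_rpow_norm_sub_sq_add (a j) y hε (p / 2)).const_mul (w j)
  have hgrad : ⟪x - y, gradient Φ y⟫ = ∑ j, w j *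
      (p / 2 * (‖y - a j‖ ^ 2 + ε) ^ (p / 2 - 1) * (2 * ⟪y - a j, x - y⟫)) := by
    rw [real_inner_comm, inner_gradient_left, hderiv.fderiv, sum_apply]
    simp [mul_assoc, inner_sub_left]
  rw [hgrad, hΦ, hΦ, Finset.mul_sum, Finset.sum_mul, ← Finset.sum_add_distrib,
    ← Finset.sum_add_distrib]
  refine Finset.sum_le_sum fun j _ => ?_
  refine (mul_le_mul_of_nonneg_left (rpow_norm_sub_sq_add_le (a j) x y hε
    (q := p / 2) (by linarith) (by linarith)) (hw j).le).trans_eq ?_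
  ring
end

section
/- For every y ∈ ℝ^d, the quadratic majorizer Ψ_y(x) = Φ(y) + ⟨x − y, ∇Φ(y)⟩ + (p/2) (Σ_{j=1}^n μ_j(y)) ‖x − y‖², with μ_j(y) = w_j (‖y − a_j‖² + ε)^{p/2 − 1}, has the IRLS update T(y) = (Σ_{j=1}^n μ_j(y) a_j) / (Σ_{j=1}^n μ_j(y)) as its unique global minimizer over ℝ^d. -/
open scoped ContDiff RealInnerProductSpace
open Filter

section

variable {E : Type*} [NormedAddCommGroup E] [InnerProductSpace ℝ E]

theorem hasGradientAt_norm_sub_sq_add_rpow [CompleteSpace E] (a y : E) {ε : ℝ} (hε : 0 < ε)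
    (q : ℝ) :
    HasGradientAt (fun x : E => (‖x - a‖ ^ 2 + ε) ^ q)
      ((2 * q * (‖y - a‖ ^ 2 + ε) ^ (q - 1)) • (y - a)) y := by
  have hpos : 0 < ‖y - a‖ ^ 2 + ε := by positivity
  have h := (((hasFDerivAt_id y).sub_const a).norm_sq.add_const ε).rpow_const
    (p := q) (Or.inl hpos.ne')
  rw [hasGradientAt_iff_hasFDerivAt]
  refine h.congr_fderiv ?_
  ext v
  simp
  ring

theorem hasGradientAt_sum_mul_norm_sub_sq_add_rpow [CompleteSpace E] {ι : Type*} [Fintype ι]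
    (a : ι → E) (w : ι → ℝ) (y : E) {ε : ℝ} (hε : 0 < ε) (q : ℝ) :
    HasGradientAt (fun x : E => ∑ j, w j * (‖x - a j‖ ^ 2 + ε) ^ q)
      ((2 * q) • ∑ j, (w j * (‖y - a j‖ ^ 2 + ε) ^ (q - 1)) • (y - a j)) y := by
  rw [hasGradientAt_iff_hasFDerivAt]
  have h := HasFDerivAt.fun_sum (u := Finset.univ) fun j _ =>
    (hasGradientAt_norm_sub_sq_add_rpow (a j) y hε q).hasFDerivAt.const_mul (w j)
  refine h.congr_fderiv ?_
  rw [Finset.smul_sum, map_sum]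
  refine Finset.sum_congr rfl fun j _ => ?_
  ext v
  simp
  ring

theorem sum_smul_sub_eq_smul_sub_weighted_mean {ι : Type*} [Fintype ι] (μ : ι → ℝ) (a : ι → E)
    (y : E) (hμ : ∑ j, μ j ≠ 0) :
    ∑ j, μ j • (y - a j) = (∑ j, μ j) • (y - (∑ j, μ j)⁻¹ • ∑ j, μ j • a j) := by
  simp only [smul_sub, Finset.sum_sub_distrib, smul_inv_smul₀ hμ, Finset.sum_smul]

/-- Completing the square. -/
theorem inner_smul_sub_add_mul_norm_sq (c : ℝ) (t v y : E) :
    ⟪v - y, (2 * c) • (y - t)⟫ + c * ‖v - y‖ ^ 2 = c * (‖v - t‖ ^ 2 - ‖y - t‖ ^ 2) := by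
  have h : v - t = (v - y) + (y - t) := by abel
  rw [h, norm_add_sq_real, inner_smul_right]
  ring

end

theorem stmt_8
    (d n : ℕ) (hd : 1 ≤ d) (hn : 1 ≤ n)
    (a : Fin n → EuclideanSpace ℝ (Fin d))
    (w : Fin n → ℝ) (hw : ∀ j, 0 < w j)
    (ε : ℝ) (hε : 0 < ε)
    (p : ℝ) (hp0 : 0 < p) (hp2 : p ≤ 2)
    (Φ : EuclideanSpace ℝ (Fin d) → ℝ)
    (hΦ : ∀ x, Φ x = ∑ j, w j * (‖x - a j‖ ^ 2 + ε) ^ (p / 2)) :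
    ∀ y : EuclideanSpace ℝ (Fin d),
      ∀ z, z ≠ (∑ j, w j * (‖y - a j‖ ^ 2 + ε) ^ (p / 2 - 1))⁻¹ •
            ∑ j, (w j * (‖y - a j‖ ^ 2 + ε) ^ (p / 2 - 1)) • a j →
        (fun v => Φ y + ⟪v - y, gradient Φ y⟫ +
            p / 2 * (∑ j, w j * (‖y - a j‖ ^ 2 + ε) ^ (p / 2 - 1)) * ‖v - y‖ ^ 2)
          ((∑ j, w j * (‖y - a j‖ ^ 2 + ε) ^ (p / 2 - 1))⁻¹ •
            ∑ j, (w j * (‖y - a j‖ ^ 2 + ε) ^ (p / 2 - 1)) • a j) <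
        Φ y + ⟪z - y, gradient Φ y⟫ +
            p / 2 * (∑ j, w j * (‖y - a j‖ ^ 2 + ε) ^ (p / 2 - 1)) * ‖z - y‖ ^ 2 := by
  intro y z hz
  have hμ : 0 < ∑ j, w j * (‖y - a j‖ ^ 2 + ε) ^ (p / 2 - 1) :=
    Finset.sum_pos (fun j _ => mul_pos (hw j) (Real.rpow_pos_of_pos (by positivity) _))
      ⟨⟨0, hn⟩, Finset.mem_univ _⟩
  have hgrad := (hasGradientAt_sum_mul_norm_sub_sq_add_rpow a w y hε (p / 2)).gradient
  rw [← funext hΦ, sum_smul_sub_eq_smul_sub_weighted_mean _ a y hμ.ne', smul_smul,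
    mul_assoc 2] at hgrad
  set M := ∑ j, w j * (‖y - a j‖ ^ 2 + ε) ^ (p / 2 - 1)
  set t := M⁻¹ • ∑ j, (w j * (‖y - a j‖ ^ 2 + ε) ^ (p / 2 - 1)) • a j
  have hdist : 0 < ‖z - t‖ := norm_pos_iff.mpr (sub_ne_zero.mpr hz)
  have hgap : 0 < p / 2 * M * ‖z - t‖ ^ 2 := by positivity
  have hvt := inner_smul_sub_add_mul_norm_sq (p / 2 * M) t t y
  have hvz := inner_smul_sub_add_mul_norm_sq (p / 2 * M) t z y
  rw [sub_self, norm_zero] at hvt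
  simp only [hgrad]
  linarith
end

section
/- The IRLS iterates produce a relaxation sequence: for every t ≥ 0, Φ(x^{(t+1)}) ≤ Φ(x^{(t)}). -/
open scoped ContDiff RealInnerProductSpace
open Filter

/-- The graph of the concave power `v ↦ v ^ q`, `0 ≤ q ≤ 1`, lies below its tangent at `u > 0`. -/
lemma Real.rpow_le_rpow_add_mul_sub {q u v : ℝ} (hq0 : 0 ≤ q) (hq1 : q ≤ 1)
    (hu : 0 < u) (hv : 0 ≤ v) : v ^ q ≤ u ^ q + q * u ^ (q - 1) * (v - u) := by
  have hbern : (v / u) ^ q ≤ 1 + q * (v / u - 1) := by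
    have hs : -1 ≤ v / u - 1 := by linarith [div_nonneg hv hu.le]
    simpa using rpow_one_add_le_one_add_mul_self hs hq0 hq1
  rw [Real.div_rpow hv hu.le, div_le_iff₀ (Real.rpow_pos_of_pos hu q)] at hbern
  rw [Real.rpow_sub_one hu.ne']
  refine hbern.trans_eq ?_
  field_simp

/-- The weighted mean minimizes the weighted sum of squared distances. -/
lemma Finset.sum_mul_norm_centerMass_sub_sq_le {ι E : Type*} [NormedAddCommGroup E]
    [InnerProductSpace ℝ E] (s : Finset ι) (μ : ι → ℝ) (a : ι → E)
    (hμ : 0 < ∑ j ∈ s, μ j) (x : E) :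
    ∑ j ∈ s, μ j * ‖s.centerMass μ a - a j‖ ^ 2 ≤ ∑ j ∈ s, μ j * ‖x - a j‖ ^ 2 := by
  set m := s.centerMass μ a with hm
  have hzero : ∑ j ∈ s, μ j • (m - a j) = 0 := by
    simp only [smul_sub, Finset.sum_sub_distrib, ← Finset.sum_smul]
    rw [hm, Finset.centerMass, smul_inv_smul₀ hμ.ne', sub_self]
  have hexpand : ∀ j, μ j * ‖x - a j‖ ^ 2 =
      μ j * ‖m - a j‖ ^ 2 + 2 * ⟪x - m, μ j • (m - a j)⟫ + μ j * ‖x - m‖ ^ 2 := by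
    intro j
    rw [← sub_add_sub_cancel x m (a j), norm_add_sq_real, inner_smul_right]
    ring
  simp only [hexpand, Finset.sum_add_distrib, ← Finset.mul_sum, ← inner_sum, hzero,
    inner_zero_right, ← Finset.sum_mul]
  nlinarith [mul_nonneg hμ.le (sq_nonneg ‖x - m‖)]

theorem stmt_10
    (d n : ℕ) (hd : 1 ≤ d) (hn : 1 ≤ n)
    (a : Fin n → EuclideanSpace ℝ (Fin d))
    (w : Fin n → ℝ) (hw : ∀ j, 0 < w j)
    (ε : ℝ) (hε : 0 < ε)
    (p : ℝ) (hp0 : 0 < p) (hp2 : p ≤ 2)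
    (Φ : EuclideanSpace ℝ (Fin d) → ℝ)
    (hΦ : ∀ x, Φ x = ∑ j, w j * (‖x - a j‖ ^ 2 + ε) ^ (p / 2))
    (x : ℕ → EuclideanSpace ℝ (Fin d))
    (hx : ∀ t, x (t + 1) =
      (∑ j, w j * (‖x t - a j‖ ^ 2 + ε) ^ (p / 2 - 1))⁻¹ •
        ∑ j, (w j * (‖x t - a j‖ ^ 2 + ε) ^ (p / 2 - 1)) • a j) :
    ∀ t, Φ (x (t + 1)) ≤ Φ (x t) := by
  intro t
  have : Nonempty (Fin n) := ⟨⟨0, hn⟩⟩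
  have hpos : ∀ y j, 0 < ‖y - a j‖ ^ 2 + ε := fun y j => by positivity
  set μ : Fin n → ℝ := fun j => w j * (‖x t - a j‖ ^ 2 + ε) ^ (p / 2 - 1) with hμ
  have hμpos : 0 < ∑ j, μ j :=
    Finset.sum_pos (fun j _ => mul_pos (hw j) (Real.rpow_pos_of_pos (hpos _ j) _))
      Finset.univ_nonempty
  have hmean : ∑ j, μ j * ‖x (t + 1) - a j‖ ^ 2 ≤ ∑ j, μ j * ‖x t - a j‖ ^ 2 := by
    rw [hx t]
    exact Finset.univ.sum_mul_norm_centerMass_sub_sq_le μ a hμpos (x t)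
  have htangent : Φ (x (t + 1)) ≤ Φ (x t) +
      p / 2 * (∑ j, μ j * ‖x (t + 1) - a j‖ ^ 2 - ∑ j, μ j * ‖x t - a j‖ ^ 2) := by
    rw [hΦ, hΦ, ← Finset.sum_sub_distrib, Finset.mul_sum, ← Finset.sum_add_distrib]
    refine Finset.sum_le_sum fun j _ => ?_
    have hj := mul_le_mul_of_nonneg_left
      (Real.rpow_le_rpow_add_mul_sub (q := p / 2) (by linarith) (by linarith)
        (hpos (x t) j) (hpos (x (t + 1)) j).le) (hw j).le
    refine hj.trans_eq ?_
    simp only [hμ]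
    ring
  nlinarith
end

section
/- Suppose 0 < p < 1, the IRLS iterates (x^{(t)}) converge to a local minimizer x* of Φ, and the Hessian Φ''(x*) is positive definite. Then (Φ(x^{(t)})) converges linearly to Φ(x*): there exist ν < 1 and T ≥ 0 such that for all t ≥ T, Φ(x^{(t+1)}) − Φ(x*) ≤ ν (Φ(x^{(t)}) − Φ(x*)). -/
open scoped ContDiff RealInnerProductSpace
open Filter

namespace IRLS

/-- A concave power lies below its tangent lines. -/
theorem rpow_le_tangent {q r s : ℝ} (hq0 : 0 ≤ q) (hq1 : q ≤ 1) (hr : 0 < r) (hs : 0 ≤ s) :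
    s ^ q ≤ r ^ q + q * r ^ (q - 1) * (s - r) := by
  have hb : (1 + (s / r - 1)) ^ q ≤ 1 + q * (s / r - 1) :=
    rpow_one_add_le_one_add_mul_self (by linarith [div_nonneg hs hr.le]) hq0 hq1
  rw [add_sub_cancel, Real.div_rpow hs hr.le, div_le_iff₀ (Real.rpow_pos_of_pos hr q)] at hb
  rw [Real.rpow_sub_one hr.ne']
  calc s ^ q ≤ (1 + q * (s / r - 1)) * r ^ q := hb
    _ = r ^ q + q * (r ^ q / r) * (s - r) := by field_simp

variable {E ι : Type*} [NormedAddCommGroup E] {a : ι → E} {w : ι → ℝ} {ε p : ℝ}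

/-- The weight of the anchor `a j` in one IRLS step from `x`. -/
noncomputable def weight (a : ι → E) (w : ι → ℝ) (ε p : ℝ) (x : E) (j : ι) : ℝ :=
  w j * (‖x - a j‖ ^ 2 + ε) ^ (p / 2 - 1)

theorem weight_pos (hw : ∀ j, 0 < w j) (hε : 0 < ε) (x : E) (j : ι) :
    0 < weight a w ε p x j :=
  mul_pos (hw j) (Real.rpow_pos_of_pos (by positivity) _)

theorem sum_weight_le [Fintype ι] (hw : ∀ j, 0 < w j) (hε : 0 < ε) (hp : p ≤ 2) (x : E) :
    ∑ j, weight a w ε p x j ≤ ∑ j, w j * ε ^ (p / 2 - 1) :=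
  Finset.sum_le_sum fun j _ ↦ mul_le_mul_of_nonneg_left
    (Real.rpow_le_rpow_of_nonpos hε (by linarith [sq_nonneg ‖x - a j‖]) (by linarith)) (hw j).le

variable [InnerProductSpace ℝ E] [Fintype ι]

/-- The smoothed `p`-th power location objective. -/
noncomputable def objective (a : ι → E) (w : ι → ℝ) (ε p : ℝ) (x : E) : ℝ :=
  ∑ j, w j * (‖x - a j‖ ^ 2 + ε) ^ (p / 2)

/-- The weighted residual at `x`; the gradient of the objective is `p` times this vector. -/
noncomputable def residual (a : ι → E) (w : ι → ℝ) (ε p : ℝ) (x : E) : E :=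
  ∑ j, weight a w ε p x j • (x - a j)

/-- The quadratic majorant of the objective at `x`. -/
theorem objective_le_majorant (hw : ∀ j, 0 < w j) (hε : 0 < ε) (hp0 : 0 ≤ p) (hp2 : p ≤ 2)
    (x y : E) :
    objective a w ε p y ≤ objective a w ε p x + p * ⟪residual a w ε p x, y - x⟫
      + p / 2 * (∑ j, weight a w ε p x j) * ‖y - x‖ ^ 2 := by
  simp only [objective, residual, sum_inner, Finset.mul_sum, Finset.sum_mul,
    ← Finset.sum_add_distrib]
  refine Finset.sum_le_sum fun j _ ↦ ?_
  have ht := mul_le_mul_of_nonneg_left (rpow_le_tangent (q := p / 2) (by linarith) (by linarith)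
    (r := ‖x - a j‖ ^ 2 + ε) (s := ‖y - a j‖ ^ 2 + ε) (by positivity) (by positivity)) (hw j).le
  have hn : ‖y - a j‖ ^ 2 = ‖x - a j‖ ^ 2 + 2 * ⟪x - a j, y - x⟫ + ‖y - x‖ ^ 2 := by
    rw [← norm_add_sq_real, sub_add_sub_cancel']
  refine ht.trans_eq ?_
  rw [real_inner_smul_left, weight, hn]
  ring

theorem hasFDerivAt_objective (hε : 0 < ε) (x : E) :
    HasFDerivAt (objective a w ε p) (p • innerSL ℝ (residual a w ε p x)) x := by
  have h (j : ι) : HasFDerivAt (fun y ↦ w j * (‖y - a j‖ ^ 2 + ε) ^ (p / 2))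
      (p • innerSL ℝ (weight a w ε p x j • (x - a j))) x := by
    have h1 := ((((hasFDerivAt_id x).sub_const (a j)).norm_sq.add_const ε).rpow_const (p := p / 2)
      (Or.inl (by positivity))).const_mul (w j)
    refine h1.congr_fderiv ?_
    ext v
    simp [weight]
    ring
  refine (HasFDerivAt.fun_sum fun j _ ↦ h j).congr_fderiv ?_
  simp only [residual, map_sum, Finset.smul_sum]

theorem norm_fderiv_objective (hε : 0 < ε) (hp : 0 ≤ p) (x : E) :
    ‖fderiv ℝ (objective a w ε p) x‖ = p * ‖residual a w ε p x‖ := by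
  rw [(hasFDerivAt_objective hε x).fderiv, norm_smul, innerSL_apply_norm, Real.norm_of_nonneg hp]

/-- One IRLS step is a gradient step on the objective. -/
theorem step_sub_self {x : E} (hM : ∑ j, weight a w ε p x j ≠ 0) :
    (∑ j, weight a w ε p x j)⁻¹ • ∑ j, weight a w ε p x j • a j - x
      = -((∑ j, weight a w ε p x j)⁻¹ • residual a w ε p x) := by
  simp only [residual, smul_sub, Finset.sum_sub_distrib, ← Finset.sum_smul]
  rw [inv_smul_smul₀ hM]
  abel

/-- Sufficient decrease of the objective along one IRLS step. -/
theorem objective_step_le [Nonempty ι] (hw : ∀ j, 0 < w j) (hε : 0 < ε) (hp0 : 0 ≤ p)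
    (hp2 : p ≤ 2) (x : E) :
    objective a w ε p ((∑ j, weight a w ε p x j)⁻¹ • ∑ j, weight a w ε p x j • a j)
      ≤ objective a w ε p x - p / (2 * ∑ j, weight a w ε p x j) * ‖residual a w ε p x‖ ^ 2 := by
  have hM : 0 < ∑ j, weight a w ε p x j :=
    Finset.sum_pos (fun j _ ↦ weight_pos hw hε x j) Finset.univ_nonempty
  refine (objective_le_majorant hw hε hp0 hp2 x _).trans_eq ?_
  rw [step_sub_self hM.ne', inner_neg_right, real_inner_smul_right, real_inner_self_eq_norm_sq,
    norm_neg, norm_smul, Real.norm_of_nonneg (inv_nonneg.2 hM.le)]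
  field_simp
  ring

end IRLS

/-- Near a zero at which the derivative is injective, a map grows at least linearly. -/
theorem exists_mul_norm_sub_le_of_injective_fderiv {E F : Type*} [NormedAddCommGroup E]
    [NormedSpace ℝ E] [FiniteDimensional ℝ E] [NormedAddCommGroup F] [NormedSpace ℝ F]
    {f : E → F} {f' : E →L[ℝ] F} {x₀ : E} (hf : HasFDerivAt f f' x₀) (h0 : f x₀ = 0)
    (hinj : Function.Injective f') :
    ∃ c > 0, ∀ᶠ x in nhds x₀, c * ‖x - x₀‖ ≤ ‖f x‖ := by
  obtain ⟨K, hK, hanti⟩ :=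
    (f' : E →ₗ[ℝ] F).exists_antilipschitzWith (LinearMap.ker_eq_bot.2 hinj)
  have hK' : (0 : ℝ) < K := hK
  refine ⟨(K : ℝ)⁻¹ / 2, by positivity, ?_⟩
  filter_upwards [hf.isLittleO.def (c := (K : ℝ)⁻¹ / 2) (by positivity)] with x hx
  have h1 : ‖x - x₀‖ ≤ K * ‖f' (x - x₀)‖ := by
    simpa using hanti.le_mul_dist (x - x₀) 0
  have h2 : (K : ℝ)⁻¹ * ‖x - x₀‖ ≤ ‖f' (x - x₀)‖ := (inv_mul_le_iff₀ hK').2 h1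
  rw [h0, sub_zero] at hx
  have h3 := norm_sub_norm_le (f' (x - x₀)) (f x)
  rw [norm_sub_rev] at h3
  linarith

theorem stmt_19
    (d n : ℕ) (hd : 1 ≤ d) (hn : 1 ≤ n)
    (a : Fin n → EuclideanSpace ℝ (Fin d))
    (w : Fin n → ℝ) (hw : ∀ j, 0 < w j)
    (ε : ℝ) (hε : 0 < ε)
    (p : ℝ) (hp0 : 0 < p) (hp1 : p < 1)
    (Φ : EuclideanSpace ℝ (Fin d) → ℝ)
    (hΦ : ∀ x, Φ x = ∑ j, w j * (‖x - a j‖ ^ 2 + ε) ^ (p / 2))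
    (x : ℕ → EuclideanSpace ℝ (Fin d))
    (hx : ∀ t, x (t + 1) =
      (∑ j, w j * (‖x t - a j‖ ^ 2 + ε) ^ (p / 2 - 1))⁻¹ •
        ∑ j, (w j * (‖x t - a j‖ ^ 2 + ε) ^ (p / 2 - 1)) • a j)
    (xstar : EuclideanSpace ℝ (Fin d))
    (hconv : Tendsto x atTop (nhds xstar))
    (hlocmin : IsLocalMin Φ xstar)
    (hposdef : ∀ u : EuclideanSpace ℝ (Fin d), u ≠ 0 →
      0 < fderiv ℝ (fderiv ℝ Φ) xstar u u) :
    ∃ ν < (1 : ℝ), ∃ T : ℕ, ∀ t ≥ T,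
      Φ (x (t + 1)) - Φ xstar ≤ ν * (Φ (x t) - Φ xstar) := by
  obtain rfl : Φ = IRLS.objective a w ε p := funext hΦ
  have : Nonempty (Fin n) := ⟨⟨0, hn⟩⟩
  have : Nonempty (Fin d) := ⟨⟨0, hd⟩⟩
  have hp2 : p ≤ 2 := by linarith
  set M₀ : ℝ := ∑ j, w j * ε ^ (p / 2 - 1)
  have hM₀_pos : 0 < M₀ := Finset.sum_pos
    (fun j _ ↦ mul_pos (hw j) (Real.rpow_pos_of_pos hε _)) Finset.univ_nonempty
  have hcrit : fderiv ℝ (IRLS.objective a w ε p) xstar = 0 := hlocmin.fderiv_eq_zero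
  have hdiff : DifferentiableAt ℝ (fderiv ℝ (IRLS.objective a w ε p)) xstar := by
    by_contra h
    obtain ⟨u, hu⟩ := exists_ne (0 : EuclideanSpace ℝ (Fin d))
    simpa [fderiv_zero_of_not_differentiableAt h] using hposdef u hu
  have hinj : Function.Injective (fderiv ℝ (fderiv ℝ (IRLS.objective a w ε p)) xstar) := by
    refine (injective_iff_map_eq_zero _).2 fun u hu ↦ ?_
    by_contra hne
    simpa [hu] using hposdef u hne
  obtain ⟨c, hc, hgrow⟩ :=
    exists_mul_norm_sub_le_of_injective_fderiv hdiff.hasFDerivAt hcrit hinj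
  have hres : IRLS.residual a w ε p xstar = 0 := by
    have h := IRLS.norm_fderiv_objective (a := a) (w := w) hε hp0.le xstar
    rw [hcrit, norm_zero, eq_comm, mul_eq_zero, norm_eq_zero] at h
    exact h.resolve_left hp0.ne'
  have hupper (y) : IRLS.objective a w ε p y - IRLS.objective a w ε p xstar
      ≤ p / 2 * M₀ * ‖y - xstar‖ ^ 2 := by
    have h := IRLS.objective_le_majorant (a := a) hw hε hp0.le hp2 xstar y
    have hM : p / 2 * (∑ j, IRLS.weight a w ε p xstar j) * ‖y - xstar‖ ^ 2
        ≤ p / 2 * M₀ * ‖y - xstar‖ ^ 2 := by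
      gcongr
      exact IRLS.sum_weight_le hw hε hp2 xstar
    rw [hres, inner_zero_left] at h
    linarith
  obtain ⟨T, hT⟩ := eventually_atTop.1 (hconv.eventually hgrow)
  refine ⟨1 - (c / (p * M₀)) ^ 2, by linarith [show 0 < (c / (p * M₀)) ^ 2 by positivity], T,
    fun t ht ↦ ?_⟩
  have hdesc : IRLS.objective a w ε p (x (t + 1)) ≤ IRLS.objective a w ε p (x t)
      - p / (2 * M₀) * ‖IRLS.residual a w ε p (x t)‖ ^ 2 := by
    have h := IRLS.objective_step_le (a := a) hw hε hp0.le hp2 (x t)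
    have hM : p / (2 * M₀) * ‖IRLS.residual a w ε p (x t)‖ ^ 2
        ≤ p / (2 * ∑ j, IRLS.weight a w ε p (x t) j) * ‖IRLS.residual a w ε p (x t)‖ ^ 2 := by
      have hpos : 0 < ∑ j, IRLS.weight a w ε p (x t) j :=
        Finset.sum_pos (fun j _ ↦ IRLS.weight_pos hw hε _ j) Finset.univ_nonempty
      gcongr
      exact IRLS.sum_weight_le hw hε hp2 (x t)
    have hxt : x (t + 1) = (∑ j, IRLS.weight a w ε p (x t) j)⁻¹ •
      ∑ j, IRLS.weight a w ε p (x t) j • a j := hx t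
    rw [hxt]
    linarith
  have hlow : (c * ‖x t - xstar‖) ^ 2 ≤ (p * ‖IRLS.residual a w ε p (x t)‖) ^ 2 := by
    rw [← IRLS.norm_fderiv_objective hε hp0.le]
    exact pow_le_pow_left₀ (by positivity) (hT t ht) 2
  have hPL : (c / (p * M₀)) ^ 2 * (IRLS.objective a w ε p (x t) - IRLS.objective a w ε p xstar)
      ≤ p / (2 * M₀) * ‖IRLS.residual a w ε p (x t)‖ ^ 2 :=
    calc _ ≤ (c / (p * M₀)) ^ 2 * (p / 2 * M₀ * ‖x t - xstar‖ ^ 2) := by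
          gcongr
          exact hupper _
      _ = (c * ‖x t - xstar‖) ^ 2 / (2 * p * M₀) := by field_simp
      _ ≤ (p * ‖IRLS.residual a w ε p (x t)‖) ^ 2 / (2 * p * M₀) := by gcongr
      _ = _ := by field_simp
  linarith
end
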